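/- Let n ≥ 2 and let Λ be an n-dimensional isotropic subspace of ℂ^{2n+1}. Then every vertex (extreme point) x of the polytope 𝒫(Λ) is a 0–1 vector; more precisely, x = χ(S) for some maximal admissible subset S ∈ 𝒟(Λ). -/

import Mathlib

/-!
The function `g = g_Λ` is bisubmodular, `g(S ∩ T) + g(S ⊔ T) ≤ g(S) + g(T)`, and the extreme points
of a polyhedron `{x | x(S) ≤ f(S)}` with `f` bisubmodular and integral are integral.

For bisubmodularity, `rk` is submodular for `∩` and `∪`, and `S ∪ T` arises from the admissible set
`S ⊔ T` by adding some number `k` of pairs `{q, q̄}`. As the barred elements contribute exactly `k`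
to the difference, it is enough that these pairs raise the rank by at least `k`. One pair at a time,
this says that on `Λ` the coordinates `q` and `q̄` do not both depend on those of an admissible set
`T` missing both. Indeed, a relation expressing `q` through `T` is an isotropic vector of `Λ^⊥`.
It lies in `Λ`, because `Λ` is a maximal isotropic subspace, it vanishes on `T`, and its coordinate
`q̄` is `1`.

For integrality, bisubmodularity makes the tight sets of `x` closed under `∩` and `⊔`. Let `M` be a
minimal tight set containing a fractional element; since `x(M)` is an integer, it contains two, `a`
and `b`. Minimality, applied to `M ∩ S` and `M ∩ (M ⊔ S)`, shows that every tight `S` treats `a` and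
`b` alike, so `x` moves freely along the difference of the corresponding signed unit vectors, and is
not extreme.

Finally the inequalities for singletons give `0 ≤ x ≤ 1`, and for `x = χ(S)` with `S` maximal
admissible the inequality of `S` itself says `rk(S) ≥ n`.
-/

open scoped BigOperators

/-- Index set for the coordinates of `ℂ^{2n+1}`: `none` is the coordinate `0`,
`some (q, false)` is the coordinate `q+1 ∈ [n]`, and `some (q, true)` is the barred
coordinate `(q+1)̄ ∈ [n]̄`. -/
abbrev Idx (n : ℕ) := Option (Fin n × Bool)

/-- The nondegenerate symmetric bilinear form
`y·z = 2 y₀ z₀ + Σ_q (y_q z_{q̄} + y_{q̄} z_q)` on `ℂ^{2n+1}`. -/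
noncomputable def bform (n : ℕ) (y z : Idx n → ℂ) : ℂ :=
  2 * y none * z none +
    ∑ q : Fin n, (y (some (q, false)) * z (some (q, true)) +
      y (some (q, true)) * z (some (q, false)))

/-- A subspace is isotropic if the bilinear form vanishes identically on it. -/
def IsIsotropic (n : ℕ) (Λ : Submodule ℂ (Idx n → ℂ)) : Prop :=
  ∀ y ∈ Λ, ∀ z ∈ Λ, bform n y z = 0

/-- `H_S`: the coordinate subspace of vectors whose coordinates indexed by `S` vanish. -/
noncomputable def coordSub (n : ℕ) (S : Set (Idx n)) : Submodule ℂ (Idx n → ℂ) where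
  carrier := {v | ∀ i ∈ S, v i = 0}
  add_mem' := by
    intro a b ha hb i hi
    simp only [Pi.add_apply, ha i hi, hb i hi, add_zero]
  zero_mem' := by intro i hi; rfl
  smul_mem' := by
    intro c a ha i hi
    simp only [Pi.smul_apply, ha i hi, smul_zero]

/-- `rk_Λ(S) = n − dim(Λ ∩ H_S)`. -/
noncomputable def rk (n : ℕ) (Λ : Submodule ℂ (Idx n → ℂ)) (S : Set (Idx n)) : ℕ :=
  n - Module.finrank ℂ ↥(Λ ⊓ coordSub n S)

/-- The set of coordinates in `[n] ∪ [n]̄` corresponding to a finite set of pairs. -/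
def finIdx (n : ℕ) (S : Finset (Fin n × Bool)) : Set (Idx n) :=
  (fun p => (some p : Idx n)) '' ↑S

/-- A subset `S ⊆ [n] ∪ [n]̄` is admissible if it contains no pair `{q, q̄}`. -/
def Admissible (n : ℕ) (S : Finset (Fin n × Bool)) : Prop :=
  ∀ q : Fin n, ¬((q, false) ∈ S ∧ (q, true) ∈ S)

/-- `rk_Λ(S)` for `S ⊆ [n] ∪ [n]̄`. -/
noncomputable def rkF (n : ℕ) (Λ : Submodule ℂ (Idx n → ℂ)) (S : Finset (Fin n × Bool)) : ℕ :=
  rk n Λ (finIdx n S)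

/-- `g_Λ(S) = rk_Λ(S) − |S ∩ [n]̄|`. -/
noncomputable def gF (n : ℕ) (Λ : Submodule ℂ (Idx n → ℂ)) (S : Finset (Fin n × Bool)) : ℤ :=
  (rkF n Λ S : ℤ) - ((S.filter fun p => p.2 = true).card : ℤ)

/-- The delta-matroid `𝒟(Λ)`: maximal admissible subsets of full rank. -/
def deltaMatroid (n : ℕ) (Λ : Submodule ℂ (Idx n → ℂ)) : Set (Finset (Fin n × Bool)) :=
  {S | Admissible n S ∧ S.card = n ∧ rkF n Λ S = n}

/-- `x(S) = Σ_{q ∈ S ∩ [n]} x_q − Σ_{q̄ ∈ S ∩ [n]̄} x_q`. -/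
def xval (n : ℕ) (x : Fin n → ℝ) (S : Finset (Fin n × Bool)) : ℝ :=
  ∑ p ∈ S.filter (fun p => p.2 = false), x p.1 -
    ∑ p ∈ S.filter (fun p => p.2 = true), x p.1

/-- The polytope `𝒫(Λ)` cut out by the inequalities `x(S) ≤ g_Λ(S)` over admissible `S`. -/
def polytopeP (n : ℕ) (Λ : Submodule ℂ (Idx n → ℂ)) : Set (Fin n → ℝ) :=
  {x | ∀ S : Finset (Fin n × Bool), Admissible n S → xval n x S ≤ (gF n Λ S : ℝ)}

/-- `χ(S')`: the 0–1 vector whose `q`-th coordinate is `1` exactly when `q ∈ S' ∩ [n]`. -/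
def chi (n : ℕ) (S : Finset (Fin n × Bool)) : Fin n → ℝ :=
  fun q => if (q, false) ∈ S then 1 else 0

/-- `S₁ ⊔ S₂ = {a ∈ S₁ ∪ S₂ : ā ∉ S₁ ∪ S₂}`. -/
def sqcup (n : ℕ) (S₁ S₂ : Finset (Fin n × Bool)) : Finset (Fin n × Bool) :=
  (S₁ ∪ S₂).filter (fun p => (p.1, !p.2) ∉ S₁ ∪ S₂)

/-! ### Linear algebra and polyhedra -/

section IsotropicSubspace

variable {K V : Type*} [Field K] [AddCommGroup V] [Module K V]
  {B : LinearMap.BilinForm K V} {W : Submodule K V}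

theorem sup_span_singleton_le_orthogonal (hrefl : B.IsRefl) (hW : W ≤ B.orthogonal W) {v : V}
    (hv : v ∈ B.orthogonal W) (hvv : B v v = 0) :
    W ⊔ Submodule.span K {v} ≤ B.orthogonal (W ⊔ Submodule.span K {v}) := by
  intro y hy z hz
  simp only [Submodule.mem_sup, Submodule.mem_span_singleton] at hy hz
  obtain ⟨w, hw, _, ⟨s, rfl⟩, rfl⟩ := hy
  obtain ⟨w', hw', _, ⟨t, rfl⟩, rfl⟩ := hz
  have hww : B w' w = 0 := hW hw w' hw'
  have hwv : B w' v = 0 := hv w' hw'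
  have hvw : B v w = 0 := hrefl w v (hv w hw)
  simp [hww, hwv, hvw, hvv]

variable [FiniteDimensional K V]

theorem two_mul_finrank_le_of_le_orthogonal (hB : B.Nondegenerate) (hW : W ≤ B.orthogonal W) :
    2 * Module.finrank K W ≤ Module.finrank K V := by
  have h := Submodule.finrank_mono hW
  rw [LinearMap.BilinForm.finrank_orthogonal hB] at h
  have := Submodule.finrank_le W
  omega

theorem mem_of_mem_orthogonal_of_isotropic (hB : B.Nondegenerate) (hrefl : B.IsRefl)
    (hW : W ≤ B.orthogonal W) (hdim : Module.finrank K V ≤ 2 * Module.finrank K W + 1) {v : V}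
    (hv : v ∈ B.orthogonal W) (hvv : B v v = 0) : v ∈ W := by
  by_contra hvW
  have h := two_mul_finrank_le_of_le_orthogonal hB
    (sup_span_singleton_le_orthogonal hrefl hW hv hvv)
  rw [Submodule.finrank_sup_span_singleton hvW] at h
  omega

end IsotropicSubspace

theorem exists_eq_sum_of_forall_eq_zero {K V ι : Type*} [Field K] [AddCommGroup V] [Module K V]
    (W : Submodule K V) (φ : ι → Module.Dual K V) (ψ : Module.Dual K V) (T : Finset ι)
    (h : ∀ v ∈ W, (∀ i ∈ T, φ i v = 0) → ψ v = 0) :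
    ∃ c : ι → K, ∀ v ∈ W, ψ v = ∑ i ∈ T, c i * φ i v := by
  have hspan : ψ.domRestrict W ∈ Submodule.span K ((fun i => (φ i).domRestrict W) '' T) := by
    rw [Set.image_eq_range]
    refine mem_span_of_iInf_ker_le_ker fun v hv => ?_
    simp only [Submodule.mem_iInf, LinearMap.mem_ker] at hv
    exact h v v.2 fun i hi => hv ⟨i, hi⟩
  obtain ⟨c, hc⟩ := (Submodule.mem_span_image_finset_iff_exists_fun' K).1 hspan
  refine ⟨c, fun v hv => ?_⟩
  simpa using (LinearMap.congr_fun hc ⟨v, hv⟩).symm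

theorem finrank_le_finrank_inf_ker_add_one {K V : Type*} [Field K] [AddCommGroup V] [Module K V]
    [FiniteDimensional K V] (W : Submodule K V) (φ : Module.Dual K V) :
    Module.finrank K W ≤ Module.finrank K ↥(W ⊓ LinearMap.ker φ) + 1 := by
  have hrange := Submodule.finrank_le (LinearMap.range (φ.domRestrict W))
  rw [Module.finrank_self] at hrange
  rw [← LinearMap.finrank_range_add_finrank_ker (φ.domRestrict W), LinearMap.ker_domRestrict,
    ← Submodule.map_comap_subtype, Submodule.finrank_map_subtype_eq]
  omega

theorem eq_zero_of_mem_extremePoints_of_active {ι E : Type*} [Finite ι] [AddCommGroup E]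
    [Module ℝ E] {ℓ : ι → E →ₗ[ℝ] ℝ} {c : ι → ℝ} {x d : E}
    (hx : x ∈ Set.extremePoints ℝ {y | ∀ i, ℓ i y ≤ c i})
    (hd : ∀ i, ℓ i x = c i → ℓ i d = 0) : d = 0 := by
  have hmem : ∀ᶠ ε : ℝ in nhds 0, ∀ i, ℓ i (x + ε • d) ≤ c i := by
    refine Filter.eventually_all.2 fun i => ?_
    simp only [map_add, map_smul, smul_eq_mul]
    rcases (hx.1 i).eq_or_lt with h | h
    · simp [hd i h, h]
    · have hcont : Continuous fun ε : ℝ => ℓ i x + ε * ℓ i d := by fun_prop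
      filter_upwards [hcont.tendsto' 0 (ℓ i x) (by simp) |>.eventually_lt_const h] with ε hε
      exact hε.le
  have hmem' : ∀ᶠ ε : ℝ in nhds 0, ∀ i, ℓ i (x + (-ε) • d) ≤ c i :=
    (continuous_neg.tendsto' (0 : ℝ) 0 neg_zero).eventually hmem
  obtain ⟨ε, ⟨h₁, h₂⟩, hε⟩ :=
    (((hmem.and hmem').filter_mono nhdsWithin_le_nhds).and
      (self_mem_nhdsWithin : {(0 : ℝ)}ᶜ ∈ nhdsWithin 0 _)).exists
  have hx_mid : x ∈ openSegment ℝ (x + ε • d) (x + (-ε) • d) :=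
    ⟨1 / 2, 1 / 2, by norm_num, by norm_num, by norm_num, by module⟩
  have hεd : ε • d = 0 := by simpa using hx.2 h₁ h₂ hx_mid
  exact (smul_eq_zero.1 hεd).resolve_left hε

theorem exists_ne_notMem_of_sum_mem {ι A : Type*} [AddCommGroup A] (Z : AddSubgroup A)
    {s : Finset ι} {f : ι → A} {a : ι} (hsum : ∑ i ∈ s, f i ∈ Z) (ha : a ∈ s) (hfa : f a ∉ Z) :
    ∃ b ∈ s, b ≠ a ∧ f b ∉ Z := by
  classical
  by_contra! hno
  have hrest : ∑ i ∈ s.erase a, f i ∈ Z :=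
    Z.sum_mem fun i hi => hno i (Finset.mem_of_mem_erase hi) (Finset.ne_of_mem_erase hi)
  rw [← Finset.add_sum_erase s f ha] at hsum
  exact hfa ((Z.add_mem_cancel_right hrest).1 hsum)

/-! ### Signed sets -/

/-- The conjugation `q ↔ q̄` of the signed elements, of which `(q, false)` encodes `q` and
`(q, true)` encodes `q̄`. -/
def bar {α : Type*} (p : α × Bool) : α × Bool := (p.1, !p.2)

@[simp] theorem bar_mk {α : Type*} (q : α) (b : Bool) : bar (q, b) = (q, !b) := rfl

@[simp] theorem bar_bar {α : Type*} (p : α × Bool) : bar (bar p) = p := by simp [bar]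

theorem bar_ne {α : Type*} (p : α × Bool) : bar p ≠ p := by simp [bar, Prod.ext_iff]

/-- The `q`-th coordinate of a vector for the signed element `q`, and its negative for `q̄`. -/
def signedCoord {α : Type*} (p : α × Bool) : (α → ℝ) →ₗ[ℝ] ℝ :=
  bif p.2 then -LinearMap.proj p.1 else LinearMap.proj p.1

@[simp] theorem signedCoord_false {α : Type*} (q : α) (x : α → ℝ) :
    signedCoord (q, false) x = x q := rfl

@[simp] theorem signedCoord_true {α : Type*} (q : α) (x : α → ℝ) :
    signedCoord (q, true) x = -x q := rfl

theorem signedCoord_bar {α : Type*} (p : α × Bool) (x : α → ℝ) :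
    signedCoord (bar p) x = -signedCoord p x := by
  rcases p with ⟨q, _ | _⟩ <;> simp

/-- The unit vector `e_q` for the signed element `q`, and `-e_q` for `q̄`. -/
def signedUnit {α : Type*} [DecidableEq α] (a : α × Bool) : α → ℝ :=
  Pi.single a.1 (bif a.2 then -1 else 1)

theorem signedCoord_signedUnit {α : Type*} [DecidableEq α] (p a : α × Bool) :
    signedCoord p (signedUnit a) = (if p = a then 1 else 0) - (if p = bar a then 1 else 0) := by
  obtain ⟨q, b⟩ := p
  obtain ⟨r, c⟩ := a
  by_cases hqr : q = r
  · subst hqr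
    cases b <;> cases c <;> simp [signedUnit]
  · cases b <;> simp [signedUnit, hqr]

theorem signedUnit_ne_zero {α : Type*} [DecidableEq α] (a : α × Bool) : signedUnit a ≠ 0 := by
  intro h
  simpa [signedCoord_signedUnit, (bar_ne a).symm] using congrArg (signedCoord a) h

theorem signedUnit_injective {α : Type*} [DecidableEq α] :
    Function.Injective (signedUnit : α × Bool → α → ℝ) := by
  intro a b h
  by_contra hab
  have := congrArg (signedCoord a) h
  simp only [signedCoord_signedUnit, if_neg (bar_ne a).symm, if_neg hab, if_true] at this
  split_ifs at this <;> norm_num at this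

section SignedSets

variable {n : ℕ} {S T : Finset (Fin n × Bool)}

theorem admissible_iff : Admissible n S ↔ ∀ p ∈ S, bar p ∉ S := by
  refine ⟨fun h => ?_, fun h q hq => h (q, false) hq.1 hq.2⟩
  rintro ⟨q, _ | _⟩ hp hp'
  exacts [h q ⟨hp, hp'⟩, h q ⟨hp', hp⟩]

theorem Admissible.mono (hT : Admissible n T) (h : S ⊆ T) : Admissible n S :=
  fun q hq => hT q ⟨h hq.1, h hq.2⟩

theorem admissible_singleton (p : Fin n × Bool) : Admissible n {p} := by
  simpa [admissible_iff] using bar_ne p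

theorem Admissible.insert (hT : Admissible n T) {a : Fin n × Bool} (ha : bar a ∉ T) :
    Admissible n (insert a T) := by
  rw [admissible_iff] at hT ⊢
  intro p hp hp'
  rcases Finset.mem_insert.1 hp with rfl | hpT <;> rcases Finset.mem_insert.1 hp' with h | h
  · exact bar_ne p h
  · exact ha h
  · exact ha (by rwa [← h, bar_bar])
  · exact hT p hpT h

theorem mem_sqcup {p : Fin n × Bool} : p ∈ sqcup n S T ↔ p ∈ S ∪ T ∧ bar p ∉ S ∪ T :=
  Finset.mem_filter

theorem admissible_sqcup (S T : Finset (Fin n × Bool)) : Admissible n (sqcup n S T) :=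
  admissible_iff.2 fun _ hp hp' => (mem_sqcup.1 hp).2 (mem_sqcup.1 hp').1

/-- The `q` for which both `q` and `q̄` lie in `U`: those cancelled from `U = S ∪ T` in `S ⊔ T`. -/
def pairedIndices (U : Finset (Fin n × Bool)) : Finset (Fin n) :=
  {q | (q, false) ∈ U ∧ (q, true) ∈ U}

theorem mem_pairedIndices_product {U : Finset (Fin n × Bool)} {p : Fin n × Bool} :
    p ∈ pairedIndices U ×ˢ Finset.univ ↔ p ∈ U ∧ bar p ∈ U := by
  rcases p with ⟨q, _ | _⟩ <;> simp [pairedIndices, and_comm]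

theorem sqcup_union_pairedIndices (S T : Finset (Fin n × Bool)) :
    sqcup n S T ∪ pairedIndices (S ∪ T) ×ˢ Finset.univ = S ∪ T := by
  ext p
  rw [Finset.mem_union (s := sqcup n S T), mem_sqcup, mem_pairedIndices_product]
  tauto

theorem disjoint_sqcup_pairedIndices (S T : Finset (Fin n × Bool)) :
    Disjoint (sqcup n S T) (pairedIndices (S ∪ T) ×ˢ Finset.univ) :=
  Finset.disjoint_left.2 fun _ hp hp' =>
    (mem_sqcup.1 hp).2 (mem_pairedIndices_product.1 hp').2

theorem sum_inter_add_sum_sqcup {M : Type*} [AddCommMonoid M] (f : Fin n × Bool → M)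
    (S T : Finset (Fin n × Bool)) :
    ∑ p ∈ S ∩ T, f p + ∑ p ∈ sqcup n S T, f p +
        ∑ q ∈ pairedIndices (S ∪ T), (f (q, true) + f (q, false)) =
      ∑ p ∈ S, f p + ∑ p ∈ T, f p := by
  have hunion : ∑ p ∈ S ∪ T, f p = ∑ p ∈ sqcup n S T, f p +
      ∑ q ∈ pairedIndices (S ∪ T), (f (q, true) + f (q, false)) := by
    conv_lhs => rw [← sqcup_union_pairedIndices S T,
      Finset.sum_union (disjoint_sqcup_pairedIndices S T), Finset.sum_product]
    simp only [Fintype.sum_bool]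
  rw [add_assoc, ← hunion, add_comm, Finset.sum_union_inter]

theorem card_barred_inter_add_card_barred_sqcup (S T : Finset (Fin n × Bool)) :
    ((S ∩ T).filter fun p => p.2 = true).card + ((sqcup n S T).filter fun p => p.2 = true).card +
        (pairedIndices (S ∪ T)).card =
      (S.filter fun p => p.2 = true).card + (T.filter fun p => p.2 = true).card := by
  simp only [Finset.card_filter]
  rw [← sum_inter_add_sum_sqcup _ S T]
  simp

theorem xval_eq_sum (x : Fin n → ℝ) (S : Finset (Fin n × Bool)) :
    xval n x S = (∑ p ∈ S, signedCoord p) x := by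
  rw [xval, Finset.sum_filter, Finset.sum_filter, ← Finset.sum_sub_distrib, LinearMap.sum_apply]
  refine Finset.sum_congr rfl ?_
  rintro ⟨q, _ | _⟩ - <;> simp

theorem xval_inter_add_xval_sqcup (x : Fin n → ℝ) (S T : Finset (Fin n × Bool)) :
    xval n x (S ∩ T) + xval n x (sqcup n S T) = xval n x S + xval n x T := by
  simp only [xval_eq_sum, LinearMap.sum_apply]
  rw [← sum_inter_add_sum_sqcup _ S T]
  simp

theorem xval_sub (x y : Fin n → ℝ) (S : Finset (Fin n × Bool)) :
    xval n (x - y) S = xval n x S - xval n y S := by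
  simp only [xval_eq_sum, map_sub]

theorem xval_singleton (x : Fin n → ℝ) (p : Fin n × Bool) :
    xval n x {p} = signedCoord p x := by
  rw [xval_eq_sum, Finset.sum_singleton]

theorem xval_signedUnit (a : Fin n × Bool) (S : Finset (Fin n × Bool)) :
    xval n (signedUnit a) S = (if a ∈ S then 1 else 0) - (if bar a ∈ S then 1 else 0) := by
  simp [xval_eq_sum, signedCoord_signedUnit]

theorem card_unbarred_add_card_barred (S : Finset (Fin n × Bool)) :
    (S.filter fun p => p.2 = false).card + (S.filter fun p => p.2 = true).card = S.card := by
  simpa using S.card_filter_add_card_filter_not fun p => p.2 = false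

theorem xval_chi (hS : Admissible n S) :
    xval n (chi n S) S = (S.filter fun p => p.2 = false).card := by
  have hunbarred : ∀ p ∈ S.filter (fun p => p.2 = false), chi n S p.1 = 1 := by
    rintro ⟨q, b⟩ hp
    obtain ⟨hpS, rfl⟩ := Finset.mem_filter.1 hp
    exact if_pos hpS
  have hbarred : ∀ p ∈ S.filter (fun p => p.2 = true), chi n S p.1 = 0 := by
    rintro ⟨q, b⟩ hp
    obtain ⟨hpS, rfl⟩ := Finset.mem_filter.1 hp
    exact if_neg fun h => hS q ⟨h, hpS⟩
  rw [xval, Finset.sum_congr rfl hunbarred, Finset.sum_congr rfl hbarred]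
  simp

theorem exists_eq_chi {x : Fin n → ℝ} (hx : ∀ q, x q = 0 ∨ x q = 1) :
    ∃ S, Admissible n S ∧ S.card = n ∧ x = chi n S := by
  classical
  let S : Finset (Fin n × Bool) := Finset.univ.image fun q => (q, decide (x q = 0))
  have hmem : ∀ q b, (q, b) ∈ S ↔ decide (x q = 0) = b := by simp [S]
  have hcard : S.card = n := by
    rw [Finset.card_image_of_injective _ fun _ _ h => (Prod.ext_iff.1 h).1, Finset.card_univ,
      Fintype.card_fin]
  refine ⟨S, fun q hq => ?_, hcard, funext fun q => ?_⟩
  · rw [hmem, hmem] at hq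
    exact Bool.false_ne_true (hq.1.symm.trans hq.2)
  · rcases hx q with h | h <;> simp only [chi, hmem] <;> simp [h]

end SignedSets

/-! ### Bisubmodular polyhedra -/

section Bisubmodular

variable {n : ℕ} {f : Finset (Fin n × Bool) → ℝ} {x : Fin n → ℝ} {S T M : Finset (Fin n × Bool)}

/-- Bisubmodularity of a function on admissible sets; its values at other sets are irrelevant. -/
def IsBisubmodular (f : Finset (Fin n × Bool) → ℝ) : Prop :=
  ∀ S T, Admissible n S → Admissible n T → f (S ∩ T) + f (sqcup n S T) ≤ f S + f T

/-- The polyhedron of a function `f` on admissible sets; `𝒫(Λ)` is that of `g_Λ`. -/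
def signedPolyhedron (f : Finset (Fin n × Bool) → ℝ) : Set (Fin n → ℝ) :=
  {x | ∀ S, Admissible n S → xval n x S ≤ f S}

/-- An admissible set whose inequality holds with equality at `x`. -/
def IsTight (f : Finset (Fin n × Bool) → ℝ) (x : Fin n → ℝ) (S : Finset (Fin n × Bool)) : Prop :=
  Admissible n S ∧ xval n x S = f S

theorem IsTight.inter_and_sqcup (hf : IsBisubmodular f) (hx : x ∈ signedPolyhedron f)
    (hS : IsTight f x S) (hT : IsTight f x T) :
    IsTight f x (S ∩ T) ∧ IsTight f x (sqcup n S T) := by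
  have hinter : Admissible n (S ∩ T) := hS.1.mono Finset.inter_subset_left
  have hsqcup := admissible_sqcup S T
  have hsum := xval_inter_add_xval_sqcup x S T
  have hle := hf S T hS.1 hT.1
  rw [hS.2, hT.2] at hsum
  have h₁ := hx _ hinter
  have h₂ := hx _ hsqcup
  exact ⟨⟨hinter, by linarith⟩, hsqcup, by linarith⟩

theorem eq_zero_of_forall_isTight (hx : x ∈ Set.extremePoints ℝ (signedPolyhedron f))
    {d : Fin n → ℝ} (hd : ∀ S, IsTight f x S → xval n d S = 0) : d = 0 := by
  have hpoly : signedPolyhedron f =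
      {y | ∀ S : {S // Admissible n S}, (∑ p ∈ S.1, signedCoord p) y ≤ f S} := by
    simp [signedPolyhedron, xval_eq_sum]
  rw [hpoly] at hx
  refine eq_zero_of_mem_extremePoints_of_active hx fun S hS => ?_
  rw [← xval_eq_sum] at hS ⊢
  exact hd S ⟨S.2, hS⟩

theorem exists_isTight_mem_or_bar_mem (hx : x ∈ Set.extremePoints ℝ (signedPolyhedron f))
    (a : Fin n × Bool) : ∃ S, IsTight f x S ∧ (a ∈ S ∨ bar a ∈ S) := by
  by_contra! hno
  refine signedUnit_ne_zero a (eq_zero_of_forall_isTight hx fun S hS => ?_)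
  simp [xval_signedUnit, hno S hS]

section MinimalTight

variable {P : Fin n × Bool → Prop} {a b : Fin n × Bool}

theorem subset_of_minimal_isTight (hf : IsBisubmodular f) (hx : x ∈ signedPolyhedron f)
    (hM : Minimal (fun M => IsTight f x M ∧ ∃ a ∈ M, P a) M) (hS : IsTight f x S)
    (haM : a ∈ M) (haP : P a) (haS : a ∈ S) : M ⊆ S := by
  have htight := (hM.prop.1.inter_and_sqcup hf hx hS).1
  have hle : M ⊆ M ∩ S :=
    hM.le_of_le ⟨htight, a, Finset.mem_inter.2 ⟨haM, haS⟩, haP⟩ Finset.inter_subset_left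
  exact hle.trans Finset.inter_subset_right

theorem bar_mem_of_minimal_isTight (hf : IsBisubmodular f) (hx : x ∈ signedPolyhedron f)
    (hM : Minimal (fun M => IsTight f x M ∧ ∃ a ∈ M, P a) M) (hS : IsTight f x S)
    (haM : a ∈ M) (haS : bar a ∈ S) (hbM : b ∈ M) (hbP : P b) : bar b ∈ S := by
  by_contra hbS
  have hbM' : bar b ∉ M := admissible_iff.1 hM.prop.1.1 b hbM
  have hb : b ∈ sqcup n M S := mem_sqcup.2 ⟨by simp [hbM], by simp [hbM', hbS]⟩
  have hsub := subset_of_minimal_isTight hf hx hM (hM.prop.1.inter_and_sqcup hf hx hS).2 hbM hbP hb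
  exact (mem_sqcup.1 (hsub haM)).2 (Finset.mem_union_right M haS)

theorem xval_signedUnit_eq_of_minimal_isTight (hf : IsBisubmodular f)
    (hx : x ∈ signedPolyhedron f) (hM : Minimal (fun M => IsTight f x M ∧ ∃ a ∈ M, P a) M)
    (haM : a ∈ M) (haP : P a) (hbM : b ∈ M) (hbP : P b) (hS : IsTight f x S) :
    xval n (signedUnit a) S = xval n (signedUnit b) S := by
  have hmem : a ∈ S ↔ b ∈ S :=
    ⟨fun h => subset_of_minimal_isTight hf hx hM hS haM haP h hbM,
      fun h => subset_of_minimal_isTight hf hx hM hS hbM hbP h haM⟩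
  have hbar : bar a ∈ S ↔ bar b ∈ S :=
    ⟨fun h => bar_mem_of_minimal_isTight hf hx hM hS haM h hbM hbP,
      fun h => bar_mem_of_minimal_isTight hf hx hM hS hbM h haM haP⟩
  simp only [xval_signedUnit, hmem, hbar]

end MinimalTight

theorem IsBisubmodular.apply_mem_of_mem_extremePoints (hf : IsBisubmodular f) (Z : AddSubgroup ℝ)
    (hZ : ∀ S, Admissible n S → f S ∈ Z) (hx : x ∈ Set.extremePoints ℝ (signedPolyhedron f))
    (q : Fin n) : x q ∈ Z := by
  by_contra hq
  have hex : ∃ M, IsTight f x M ∧ ∃ a ∈ M, signedCoord a x ∉ Z := by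
    obtain ⟨S, hS, hqS | hqS⟩ := exists_isTight_mem_or_bar_mem hx (q, false)
    · exact ⟨S, hS, _, hqS, hq⟩
    · exact ⟨S, hS, _, hqS, by rwa [signedCoord_bar, neg_mem_iff]⟩
  obtain ⟨M, hM⟩ := exists_minimal_of_wellFoundedLT _ hex
  obtain ⟨⟨hMadm, hMtight⟩, a, haM, haZ⟩ := hM.prop
  have hsum : ∑ p ∈ M, signedCoord p x ∈ Z := by
    rw [← LinearMap.sum_apply, ← xval_eq_sum, hMtight]
    exact hZ M hMadm
  obtain ⟨b, hbM, hba, hbZ⟩ := exists_ne_notMem_of_sum_mem Z hsum haM haZ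
  have hdir : signedUnit b - signedUnit a = 0 := eq_zero_of_forall_isTight hx fun S hS => by
    rw [xval_sub, sub_eq_zero]
    exact xval_signedUnit_eq_of_minimal_isTight hf hx.1 hM hbM hbZ haM haZ hS
  exact hba (signedUnit_injective (sub_eq_zero.1 hdir))

end Bisubmodular

/-! ### The rank function -/

section Rank

variable {n : ℕ} {Λ : Submodule ℂ (Idx n → ℂ)}

theorem coordSub_anti {S T : Set (Idx n)} (h : S ⊆ T) : coordSub n T ≤ coordSub n S :=
  fun _ hv i hi => hv i (h hi)

theorem coordSub_union (S T : Set (Idx n)) :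
    coordSub n (S ∪ T) = coordSub n S ⊓ coordSub n T :=
  le_antisymm (le_inf (coordSub_anti Set.subset_union_left) (coordSub_anti Set.subset_union_right))
    fun _ hv i hi => hi.elim (hv.1 i) (hv.2 i)

theorem coordSub_singleton (i : Idx n) : coordSub n {i} = LinearMap.ker (LinearMap.proj i) := by
  ext v
  simp [coordSub]

theorem rk_add_finrank (hΛ : Module.finrank ℂ Λ ≤ n) (S : Set (Idx n)) :
    rk n Λ S + Module.finrank ℂ ↥(Λ ⊓ coordSub n S) = n :=
  Nat.sub_add_cancel ((Submodule.finrank_mono inf_le_left).trans hΛ)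

theorem rk_le (S : Set (Idx n)) : rk n Λ S ≤ n := Nat.sub_le _ _

theorem rk_mono {S T : Set (Idx n)} (h : S ⊆ T) : rk n Λ S ≤ rk n Λ T :=
  Nat.sub_le_sub_left (Submodule.finrank_mono (inf_le_inf_left Λ (coordSub_anti h))) n

theorem rk_inter_add_rk_union_le (hΛ : Module.finrank ℂ Λ ≤ n) (S T : Set (Idx n)) :
    rk n Λ (S ∩ T) + rk n Λ (S ∪ T) ≤ rk n Λ S + rk n Λ T := by
  have hdim := Submodule.finrank_sup_add_finrank_inf_eq (Λ ⊓ coordSub n S) (Λ ⊓ coordSub n T)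
  rw [← inf_inf_distrib_left, ← coordSub_union] at hdim
  have hsup : Module.finrank ℂ ↥((Λ ⊓ coordSub n S) ⊔ (Λ ⊓ coordSub n T)) ≤
      Module.finrank ℂ ↥(Λ ⊓ coordSub n (S ∩ T)) :=
    Submodule.finrank_mono <|
      sup_le (inf_le_inf_left Λ (coordSub_anti Set.inter_subset_left))
        (inf_le_inf_left Λ (coordSub_anti Set.inter_subset_right))
  have hS := rk_add_finrank hΛ S
  have hT := rk_add_finrank hΛ T
  have hST := rk_add_finrank hΛ (S ∩ T)
  have hST' := rk_add_finrank hΛ (S ∪ T)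
  omega

theorem rk_lt_rk_insert (hΛ : Module.finrank ℂ Λ ≤ n) {S : Set (Idx n)} {i : Idx n}
    {v : Idx n → ℂ} (hv : v ∈ Λ) (hvS : v ∈ coordSub n S) (hvi : v i ≠ 0) :
    rk n Λ S < rk n Λ (insert i S) := by
  have hlt : Λ ⊓ coordSub n (insert i S) < Λ ⊓ coordSub n S :=
    lt_of_le_not_ge (inf_le_inf_left Λ (coordSub_anti (Set.subset_insert i S)))
      fun hle => hvi ((hle ⟨hv, hvS⟩).2 i (Set.mem_insert i S))
  have hdim := Submodule.finrank_lt_finrank_of_lt hlt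
  have hS := rk_add_finrank hΛ S
  have hS' := rk_add_finrank hΛ (insert i S)
  omega

theorem rk_singleton_le_one (hΛ : n ≤ Module.finrank ℂ Λ) (i : Idx n) : rk n Λ {i} ≤ 1 := by
  have h := finrank_le_finrank_inf_ker_add_one Λ (LinearMap.proj i)
  rw [← coordSub_singleton] at h
  unfold rk
  omega

theorem finIdx_insert (a : Fin n × Bool) (S : Finset (Fin n × Bool)) :
    finIdx n (insert a S) = insert (some a) (finIdx n S) := by
  simp [finIdx, Set.image_insert_eq]

theorem finIdx_union (S T : Finset (Fin n × Bool)) :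
    finIdx n (S ∪ T) = finIdx n S ∪ finIdx n T := by
  simp [finIdx, Set.image_union]

theorem finIdx_inter (S T : Finset (Fin n × Bool)) :
    finIdx n (S ∩ T) = finIdx n S ∩ finIdx n T := by
  simp [finIdx, Set.image_inter (Option.some_injective _)]

theorem mem_coordSub_finIdx {S : Finset (Fin n × Bool)} {v : Idx n → ℂ} :
    v ∈ coordSub n (finIdx n S) ↔ ∀ p ∈ S, v (some p) = 0 :=
  Set.forall_mem_image

theorem rkF_inter_add_rkF_union_le (hΛ : Module.finrank ℂ Λ ≤ n) (S T : Finset (Fin n × Bool)) :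
    rkF n Λ (S ∩ T) + rkF n Λ (S ∪ T) ≤ rkF n Λ S + rkF n Λ T := by
  simpa only [rkF, finIdx_inter, finIdx_union] using rk_inter_add_rk_union_le hΛ _ _

theorem gF_singleton_le (hΛ : n ≤ Module.finrank ℂ Λ) (p : Fin n × Bool) :
    gF n Λ {p} ≤ if p.2 then 0 else 1 := by
  have h : rkF n Λ {p} ≤ 1 := by
    simpa [rkF, finIdx] using rk_singleton_le_one hΛ (some p)
  rcases p with ⟨q, _ | _⟩ <;> simpa [gF, Finset.filter_singleton] using h

theorem mem_Icc_of_mem_polytopeP (hΛ : n ≤ Module.finrank ℂ Λ) {x : Fin n → ℝ}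
    (hx : x ∈ polytopeP n Λ) (q : Fin n) : x q ∈ Set.Icc 0 1 := by
  have hcoord : ∀ p, signedCoord p x ≤ if p.2 then 0 else 1 := fun p => by
    rw [← xval_singleton]
    exact (hx _ (admissible_singleton p)).trans (by exact_mod_cast gF_singleton_le hΛ p)
  exact ⟨by simpa using hcoord (q, true), by simpa using hcoord (q, false)⟩

theorem mem_deltaMatroid_of_chi_mem_polytopeP {S : Finset (Fin n × Bool)} (hS : Admissible n S)
    (hcard : S.card = n) (hchi : chi n S ∈ polytopeP n Λ) : S ∈ deltaMatroid n Λ := by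
  have hle := hchi S hS
  rw [xval_chi hS] at hle
  have hle' : ((S.filter fun p => p.2 = false).card : ℤ) ≤ gF n Λ S := by exact_mod_cast hle
  have hcount := card_unbarred_add_card_barred S
  have hrk : rkF n Λ S ≤ n := rk_le _
  refine ⟨hS, hcard, ?_⟩
  unfold gF at hle'
  omega

end Rank

/-! ### Isotropic subspaces -/

section Isotropic

variable {n : ℕ} {Λ : Submodule ℂ (Idx n → ℂ)} {T : Finset (Fin n × Bool)} {a : Fin n × Bool}

/-- The form `bform` bundled as a bilinear form. -/
noncomputable def bilin (n : ℕ) : LinearMap.BilinForm ℂ (Idx n → ℂ) :=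
  LinearMap.mk₂ ℂ (bform n)
    (fun y y' z => by
      simp only [bform, Pi.add_apply, add_mul, mul_add, Finset.sum_add_distrib]; ring)
    (fun c y z => by
      simp only [bform, Pi.smul_apply, smul_eq_mul, mul_add, Finset.mul_sum, mul_assoc,
        mul_left_comm])
    (fun y z z' => by
      simp only [bform, Pi.add_apply, mul_add, Finset.sum_add_distrib]; ring)
    (fun c y z => by
      simp only [bform, Pi.smul_apply, smul_eq_mul, mul_add, Finset.mul_sum, mul_left_comm])

theorem bilin_apply (y z : Idx n → ℂ) : bilin n y z = bform n y z := rfl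

theorem bilin_isSymm : (bilin n).IsSymm :=
  ⟨fun y z => by simp only [bilin_apply, bform, mul_comm, mul_left_comm, add_comm]⟩

/-- The vector representing the linear form `v ↦ ∑ p, c p * v_p` with respect to `bilin`. -/
def dualVector (c : Fin n × Bool → ℂ) : Idx n → ℂ :=
  fun i => i.elim 0 (c ∘ bar)

theorem dualVector_some (c : Fin n × Bool → ℂ) (p : Fin n × Bool) :
    dualVector c (some p) = c (bar p) := rfl

theorem bilin_dualVector (v : Idx n → ℂ) (c : Fin n × Bool → ℂ) :
    bilin n v (dualVector c) = ∑ p, c p * v (some p) := by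
  simp only [bilin_apply, bform, dualVector, Option.elim_none, Option.elim_some,
    Function.comp_apply, bar_mk, Bool.not_true, Bool.not_false, mul_zero, zero_add,
    Fintype.sum_prod_type, Fintype.sum_bool]
  exact Finset.sum_congr rfl fun q _ => by ring

theorem bilin_dualVector_self (hT : Admissible n T) {c : Fin n × Bool → ℂ}
    (hc : ∀ p ∉ T, c p = 0) : bilin n (dualVector c) (dualVector c) = 0 := by
  rw [bilin_dualVector]
  refine Finset.sum_eq_zero fun p _ => ?_
  by_cases hp : p ∈ T
  · rw [dualVector_some, hc _ (admissible_iff.1 hT p hp), mul_zero]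
  · rw [hc p hp, zero_mul]

theorem bilin_nondegenerate : (bilin n).Nondegenerate := by
  refine bilin_isSymm.isRefl.nondegenerate_iff_separatingLeft.2 fun y hy => funext fun i => ?_
  rcases i with _ | p
  · simpa [bilin_apply, bform] using hy (Pi.single none 1)
  · simpa [bilin_dualVector, Pi.single_apply] using hy (dualVector (Pi.single p 1))

theorem IsIsotropic.mem_of_mem_orthogonal (hiso : IsIsotropic n Λ)
    (hΛ : n ≤ Module.finrank ℂ Λ) {u : Idx n → ℂ} (hu : u ∈ (bilin n).orthogonal Λ)
    (huu : bilin n u u = 0) : u ∈ Λ := by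
  refine mem_of_mem_orthogonal_of_isotropic bilin_nondegenerate bilin_isSymm.isRefl
    (fun z hz y hy => hiso y hy z hz) ?_ hu huu
  simp only [Module.finrank_fintype_fun_eq_card, Fintype.card_option, Fintype.card_prod,
    Fintype.card_fin, Fintype.card_bool]
  omega

theorem IsIsotropic.exists_mem_apply_bar_ne_zero (hiso : IsIsotropic n Λ)
    (hΛ : n ≤ Module.finrank ℂ Λ) (hT : Admissible n T) (ha : a ∉ T) (ha' : bar a ∉ T)
    (hdep : ∀ v ∈ Λ, v ∈ coordSub n (finIdx n T) → v (some a) = 0) :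
    ∃ u ∈ Λ, u ∈ coordSub n (finIdx n T) ∧ u (some (bar a)) ≠ 0 := by
  obtain ⟨c₀, hc₀⟩ := exists_eq_sum_of_forall_eq_zero Λ
    (fun p : Fin n × Bool => LinearMap.proj (R := ℂ) (φ := fun _ : Idx n => ℂ) (some p))
    (LinearMap.proj (some a)) T fun v hv hvT => hdep v hv (mem_coordSub_finIdx.2 hvT)
  let c : Fin n × Bool → ℂ := Pi.single a 1 - Set.indicator T c₀
  have hca : c a = 1 := by simp [c, ha]
  have hc : ∀ p ∉ insert a T, c p = 0 := fun p hp => by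
    rw [Finset.mem_insert, not_or] at hp
    simp [c, hp.1, hp.2]
  have hrel : ∀ v ∈ Λ, ∑ p, c p * v (some p) = 0 := fun v hv => by
    have hv₀ : v (some a) = ∑ p ∈ T, c₀ p * v (some p) := hc₀ v hv
    simp [c, sub_mul, Pi.single_apply, Set.indicator_apply, hv₀]
  have hins : Admissible n (insert a T) := hT.insert ha'
  refine ⟨dualVector c, hiso.mem_of_mem_orthogonal hΛ (fun v hv => ?_)
    (bilin_dualVector_self hins hc), mem_coordSub_finIdx.2 fun p hp => ?_, ?_⟩
  · exact (bilin_dualVector v c).trans (hrel v hv)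
  · exact hc _ (admissible_iff.1 hins p (Finset.mem_insert_of_mem hp))
  · simp [dualVector_some, hca]

theorem IsIsotropic.exists_rkF_lt_rkF_insert (hiso : IsIsotropic n Λ)
    (hΛ : Module.finrank ℂ Λ = n) (hT : Admissible n T) {q : Fin n} (hq : ∀ b, (q, b) ∉ T) :
    ∃ b, rkF n Λ T < rkF n Λ (insert (q, b) T) := by
  suffices h : ∃ b, ∃ v ∈ Λ, v ∈ coordSub n (finIdx n T) ∧ v (some (q, b)) ≠ 0 by
    obtain ⟨b, v, hv, hvT, hvb⟩ := h
    exact ⟨b, by simpa only [rkF, finIdx_insert] using rk_lt_rk_insert hΛ.le hv hvT hvb⟩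
  by_cases hdep : ∀ v ∈ Λ, v ∈ coordSub n (finIdx n T) → v (some (q, false)) = 0
  · exact ⟨true, hiso.exists_mem_apply_bar_ne_zero hΛ.ge hT (hq false) (hq true) hdep⟩
  · push Not at hdep
    exact ⟨false, hdep⟩

theorem IsIsotropic.rkF_add_card_le (hiso : IsIsotropic n Λ) (hΛ : Module.finrank ℂ Λ = n)
    (hT : Admissible n T) {Q : Finset (Fin n)} (hQ : Disjoint T (Q ×ˢ Finset.univ)) :
    rkF n Λ T + Q.card ≤ rkF n Λ (T ∪ Q ×ˢ Finset.univ) := by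
  induction Q using Finset.induction_on generalizing T with
  | empty => simp
  | insert q Q hqQ ih =>
    have hTQ : ∀ r ∈ insert q Q, ∀ b, (r, b) ∉ T := fun r hr b hb =>
      Finset.disjoint_left.1 hQ hb (by simpa using hr)
    have hqT := hTQ q (Finset.mem_insert_self q Q)
    obtain ⟨b, hb⟩ := hiso.exists_rkF_lt_rkF_insert hΛ hT hqT
    have hdisj : Disjoint (insert (q, b) T) (Q ×ˢ Finset.univ) := by
      refine Finset.disjoint_insert_left.2 ⟨by simpa using hqQ, Finset.disjoint_left.2 ?_⟩
      intro p hp hp'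
      exact hTQ p.1 (Finset.mem_insert_of_mem (Finset.mem_product.1 hp').1) p.2 hp
    have hstep := ih (hT.insert (a := (q, b)) (hqT (!b))) hdisj
    have hsub : insert (q, b) T ∪ Q ×ˢ Finset.univ ⊆ T ∪ insert q Q ×ˢ Finset.univ := by
      intro p
      simp only [Finset.mem_union, Finset.mem_insert, Finset.mem_product]
      rintro ((rfl | h) | h) <;> simp [*]
    have hmono : rkF n Λ (insert (q, b) T ∪ Q ×ˢ Finset.univ) ≤
        rkF n Λ (T ∪ insert q Q ×ˢ Finset.univ) :=
      rk_mono (Set.image_mono (Finset.coe_subset.2 hsub))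
    rw [Finset.card_insert_of_notMem hqQ]
    omega

theorem IsIsotropic.isBisubmodular_gF (hiso : IsIsotropic n Λ) (hΛ : Module.finrank ℂ Λ = n) :
    IsBisubmodular fun S => (gF n Λ S : ℝ) := by
  intro S T _ _
  have hsubmod := rkF_inter_add_rkF_union_le hΛ.le S T
  have hpairs := hiso.rkF_add_card_le hΛ (admissible_sqcup S T) (disjoint_sqcup_pairedIndices S T)
  rw [sqcup_union_pairedIndices] at hpairs
  have hbarred := card_barred_inter_add_card_barred_sqcup S T
  have h : gF n Λ (S ∩ T) + gF n Λ (sqcup n S T) ≤ gF n Λ S + gF n Λ T := by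
    unfold gF
    omega
  beta_reduce
  exact_mod_cast h

theorem IsIsotropic.eq_zero_or_eq_one_of_mem_extremePoints (hiso : IsIsotropic n Λ)
    (hΛ : Module.finrank ℂ Λ = n) {x : Fin n → ℝ}
    (hx : x ∈ Set.extremePoints ℝ (polytopeP n Λ)) (q : Fin n) : x q = 0 ∨ x q = 1 := by
  obtain ⟨k, hk⟩ := (hiso.isBisubmodular_gF hΛ).apply_mem_of_mem_extremePoints
    (Int.castAddHom ℝ).range (fun S _ => ⟨gF n Λ S, rfl⟩) hx q
  obtain ⟨h₀, h₁⟩ := mem_Icc_of_mem_polytopeP hΛ.ge hx.1 q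
  replace hk : (k : ℝ) = x q := hk
  rw [← hk] at h₀ h₁ ⊢
  norm_cast at h₀ h₁ ⊢
  omega

end Isotropic

theorem stmt11 (n : ℕ) (hn : 2 ≤ n)
    (Λ : Submodule ℂ (Idx n → ℂ)) (hiso : IsIsotropic n Λ)
    (hΛ : Module.finrank ℂ ↥Λ = n)
    (x : Fin n → ℝ) (hx : x ∈ Set.extremePoints ℝ (polytopeP n Λ)) :
    ∃ S ∈ deltaMatroid n Λ, x = chi n S := by
  obtain ⟨S, hS, hcard, rfl⟩ :=
    exists_eq_chi (hiso.eq_zero_or_eq_one_of_mem_extremePoints hΛ hx)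
  exact ⟨S, mem_deltaMatroid_of_chi_mem_polytopeP hS hcard hx.1, rfl⟩
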